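/- Let H be a separable infinite-dimensional complex Hilbert space, let L be a Lie subalgebra of B(H) consisting of compact operators, and let T, S ∈ L. Then every element of the smallest Lie ideal of L containing the commutator [T, S] = TS − ST belongs to the two-sided ideal product (T)·K(H), where (T) is the two-sided ideal of B(H) generated by T. -/

import Mathlib

/-- The two-sided ideal of compact operators on `H`. -/
noncomputable def compactIdeal (H : Type*) [NormedAddCommGroup H]
    [InnerProductSpace ℂ H] : TwoSidedIdeal (H →L[ℂ] H) :=
  TwoSidedIdeal.mk' {T : H →L[ℂ] H | IsCompactOperator (T : H → H)}
    isCompactOperator_zero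
    (fun hx hy => hx.add hy)
    (fun hx => hx.neg)
    (fun {x y} hy => by simpa [Function.comp] using hy.clm_comp x)
    (fun {x y} hx => by simpa [Function.comp] using hx.comp_clm y)

/-- The product `I·J` of two two-sided ideals: the two-sided ideal whose elements are the
finite sums of products `XY` with `X ∈ I` and `Y ∈ J`. -/
noncomputable def idealMul {R : Type*} [Ring R] (I J : TwoSidedIdeal R) : TwoSidedIdeal R :=
  TwoSidedIdeal.span {x : R | ∃ a ∈ I, ∃ b ∈ J, x = a * b}

/-!
If `A* A = B* B` then `‖A x‖ = ‖B x‖` for all `x`, so each of `A`, `B` is a bounded operator times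
the other. For `B = |A|` this gives `A = U |A|` and `|A| = V A`, and `|A|` is self-adjoint, so
`A = U A* V*`. Hence two-sided ideals of `B(H)` are closed under adjoints, and since the adjoint
reverses products, the product of such ideals is commutative. For `T ∈ I` and `S ∈ J` both `TS` and
`ST` therefore lie in `I·J`, and `L ∩ I·J` is a Lie ideal of `L` containing `[T, S]`.
-/

section TwoSidedIdeal

variable {R : Type*} [Ring R] {I J : TwoSidedIdeal R}

theorem mul_mem_idealMul {a b : R} (ha : a ∈ I) (hb : b ∈ J) : a * b ∈ idealMul I J :=
  TwoSidedIdeal.subset_span ⟨a, ha, b, hb, rfl⟩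

theorem idealMul_le {K : TwoSidedIdeal R} :
    idealMul I J ≤ K ↔ ∀ a ∈ I, ∀ b ∈ J, a * b ∈ K := by
  refine TwoSidedIdeal.span_le.trans ⟨fun h a ha b hb ↦ h ⟨a, ha, b, hb, rfl⟩, ?_⟩
  rintro h _ ⟨a, ha, b, hb, rfl⟩
  exact h a ha b hb

theorem idealMul_comm_of_star_mem [StarRing R]
    (hstar : ∀ (I : TwoSidedIdeal R) {x : R}, x ∈ I → star x ∈ I) (I J : TwoSidedIdeal R) :
    idealMul I J = idealMul J I := by
  have swap_le (I J : TwoSidedIdeal R) : idealMul I J ≤ idealMul J I := by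
    refine idealMul_le.2 fun a ha b hb ↦ ?_
    have h : star (star b * star a) ∈ idealMul J I :=
      hstar _ (mul_mem_idealMul (hstar J hb) (hstar I ha))
    rwa [star_mul, star_star, star_star] at h
  exact le_antisymm (swap_le I J) (swap_le J I)

theorem mem_of_forall_lieIdeal_mem {k : Type*} [CommSemiring k] [Algebra k R] {L : Submodule k R}
    (hLie : ∀ A ∈ L, ∀ B ∈ L, A * B - B * A ∈ L) {C X : R} (hCL : C ∈ L) (hCI : C ∈ I)
    (hX : ∀ J : Submodule k R,
      J ≤ L → (∀ A ∈ L, ∀ B ∈ J, A * B - B * A ∈ J) → C ∈ J → X ∈ J) :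
    X ∈ I := by
  have hbracket : ∀ A ∈ L, ∀ B ∈ L ⊓ I.asIdeal.restrictScalars k,
      A * B - B * A ∈ L ⊓ I.asIdeal.restrictScalars k := fun A hA B ⟨hBL, hBI⟩ ↦
    ⟨hLie A hA B hBL, I.sub_mem (I.mul_mem_left A B hBI) (I.mul_mem_right B A hBI)⟩
  exact (hX _ inf_le_left hbracket ⟨hCL, hCI⟩).2

end TwoSidedIdeal

section Factorization

variable {𝕜 E F G : Type*} [RCLike 𝕜]

theorem exists_continuousLinearMap_apply_eq_of_norm_le [AddCommGroup E] [Module 𝕜 E]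
    [NormedAddCommGroup F] [NormedSpace 𝕜 F] [CompleteSpace F]
    [NormedAddCommGroup G] [InnerProductSpace 𝕜 G] [CompleteSpace G]
    (A : E →ₗ[𝕜] F) (B : E →ₗ[𝕜] G) {c : ℝ} (h : ∀ x, ‖A x‖ ≤ c * ‖B x‖) :
    ∃ C : G →L[𝕜] F, ∀ x, C (B x) = A x := by
  let M : Submodule 𝕜 G := B.range.topologicalClosure
  let e : E →ₗ[𝕜] M :=
    B.codRestrict M fun x ↦ B.range.le_topologicalClosure (B.mem_range_self x)
  have he : DenseRange e := by
    intro y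
    rw [closure_subtype, ← Set.range_comp]
    exact y.2
  refine ⟨(A.extendOfNorm e).comp M.orthogonalProjectionOnto, fun x ↦ ?_⟩
  have hproj : M.orthogonalProjectionOnto (B x) = e x :=
    Submodule.orthogonalProjectionOnto_mem_subspace_eq_self (e x)
  rw [ContinuousLinearMap.comp_apply, hproj, LinearMap.extendOfNorm_eq he ⟨c, h⟩]

open ContinuousLinearMap in
theorem norm_apply_eq_of_adjoint_comp_self_eq
    [NormedAddCommGroup E] [InnerProductSpace 𝕜 E] [CompleteSpace E]
    [NormedAddCommGroup F] [InnerProductSpace 𝕜 F] [CompleteSpace F]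
    [NormedAddCommGroup G] [InnerProductSpace 𝕜 G] [CompleteSpace G]
    {A : E →L[𝕜] F} {B : E →L[𝕜] G} (h : adjoint A ∘L A = adjoint B ∘L B) (x : E) :
    ‖A x‖ = ‖B x‖ := by
  rw [apply_norm_eq_sqrt_inner_adjoint_left, h, ← apply_norm_eq_sqrt_inner_adjoint_left]

theorem exists_eq_mul_of_star_mul_self_eq
    [NormedAddCommGroup E] [InnerProductSpace 𝕜 E] [CompleteSpace E]
    {A B : E →L[𝕜] E} (h : star A * A = star B * B) : ∃ C : E →L[𝕜] E, A = C * B := by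
  obtain ⟨C, hC⟩ := exists_continuousLinearMap_apply_eq_of_norm_le (c := 1)
    (A : E →ₗ[𝕜] E) (B : E →ₗ[𝕜] E) fun x ↦
      (norm_apply_eq_of_adjoint_comp_self_eq h x).le.trans_eq (one_mul _).symm
  exact ⟨C, ContinuousLinearMap.ext fun x ↦ (hC x).symm⟩

end Factorization

section Operators

variable {H : Type*} [NormedAddCommGroup H] [InnerProductSpace ℂ H]

theorem mem_compactIdeal {A : H →L[ℂ] H} : A ∈ compactIdeal H ↔ IsCompactOperator (A : H → H) :=
  TwoSidedIdeal.mem_mk' ..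

variable [CompleteSpace H]

theorem exists_eq_mul_star_mul (A : H →L[ℂ] H) : ∃ U V : H →L[ℂ] H, A = U * star A * V := by
  have habs : star (CFC.abs A) = CFC.abs A := (CFC.abs_nonneg A).isSelfAdjoint
  have hsq : star (CFC.abs A) * CFC.abs A = star A * A := by rw [habs, CFC.abs_mul_abs]
  obtain ⟨U, hU⟩ := exists_eq_mul_of_star_mul_self_eq hsq.symm
  obtain ⟨V, hV⟩ := exists_eq_mul_of_star_mul_self_eq hsq
  refine ⟨U, star V, ?_⟩
  calc
    A = U * star (CFC.abs A) := by rw [habs, ← hU]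
    _ = U * star (V * A) := by rw [← hV]
    _ = U * star A * star V := by rw [star_mul, mul_assoc]

theorem star_mem_twoSidedIdeal (I : TwoSidedIdeal (H →L[ℂ] H)) {A : H →L[ℂ] H} (hA : A ∈ I) :
    star A ∈ I := by
  obtain ⟨U, V, hUV⟩ := exists_eq_mul_star_mul (star A)
  rw [star_star] at hUV
  rw [hUV]
  exact I.mul_mem_right _ _ (I.mul_mem_left _ _ hA)

theorem idealMul_comm (I J : TwoSidedIdeal (H →L[ℂ] H)) : idealMul I J = idealMul J I :=
  idealMul_comm_of_star_mem star_mem_twoSidedIdeal I J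

theorem commutator_mem_idealMul {I J : TwoSidedIdeal (H →L[ℂ] H)} {T S : H →L[ℂ] H}
    (hT : T ∈ I) (hS : S ∈ J) : T * S - S * T ∈ idealMul I J := by
  have hST : S * T ∈ idealMul I J := idealMul_comm J I ▸ mul_mem_idealMul hS hT
  exact (idealMul I J).sub_mem (mul_mem_idealMul hT hS) hST

theorem stmt8_general {L : Submodule ℂ (H →L[ℂ] H)}
    (hLie : ∀ A ∈ L, ∀ B ∈ L, A * B - B * A ∈ L)
    {I J : TwoSidedIdeal (H →L[ℂ] H)} {T S : H →L[ℂ] H}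
    (hTL : T ∈ L) (hSL : S ∈ L) (hTI : T ∈ I) (hSJ : S ∈ J) {X : H →L[ℂ] H}
    (hX : ∀ K : Submodule ℂ (H →L[ℂ] H),
      K ≤ L → (∀ A ∈ L, ∀ B ∈ K, A * B - B * A ∈ K) → T * S - S * T ∈ K → X ∈ K) :
    X ∈ idealMul I J :=
  mem_of_forall_lieIdeal_mem hLie (hLie T hTL S hSL) (commutator_mem_idealMul hTI hSJ) hX

end Operators

/-- Let `H` be a separable infinite-dimensional complex Hilbert space, `L` a Lie
subalgebra of `B(H)` consisting of compact operators, and `T, S ∈ L`.  Every element of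
the smallest Lie ideal of `L` containing the commutator `[T, S]` (i.e. every element lying
in all Lie ideals of `L` containing `[T, S]`) belongs to the ideal product `(T)·K(H)`. -/
theorem stmt8 {H : Type*} [NormedAddCommGroup H] [InnerProductSpace ℂ H]
    [CompleteSpace H] [TopologicalSpace.SeparableSpace H]
    (hHinf : ¬ FiniteDimensional ℂ H)
    (L : Submodule ℂ (H →L[ℂ] H))
    (hLie : ∀ A ∈ L, ∀ B ∈ L, A * B - B * A ∈ L)
    (hLcompact : ∀ T ∈ L, IsCompactOperator (T : H → H))
    (T S : H →L[ℂ] H) (hT : T ∈ L) (hS : S ∈ L)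
    (X : H →L[ℂ] H)
    (hX : ∀ J : Submodule ℂ (H →L[ℂ] H),
        J ≤ L → (∀ A ∈ L, ∀ B ∈ J, A * B - B * A ∈ J) → T * S - S * T ∈ J → X ∈ J) :
    X ∈ idealMul (TwoSidedIdeal.span {T}) (compactIdeal H) := by
  exact stmt8_general hLie hT hS (TwoSidedIdeal.subset_span (Set.mem_singleton T))
    (mem_compactIdeal.2 (hLcompact S hS)) hX
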